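/- arXiv:2311.03256 — 3 statements merged into one kernel-verified Lean document; each statement's English description precedes it below -/
import Mathlib

section
/- Let N be a natural number, p1, p2, p3 reals with 0 < p1, p2, p3 < 1, and λ a nonzero real number. Then for all natural numbers i, j with i + j ≤ N and all integers x, y with 0 ≤ x, 0 ≤ y and x + y ≤ N, the λ-Griffiths polynomials satisfy the recurrence relation −x·G^λ_{i,j}(x,y) = ((1−p1)/λ)·(λp1(1−p3)/(1−p1) − p3)·(λp1(1−p2)/(1−p1) + 1)·(N−i−j)·G^λ_{i+1,j}(x,y) − ((1−p1)/λ)·(λ(1−p3)+p3)·(λ(1−p2)−1)·i·G^λ_{i−1,j}(x,y) + p2·(λp1(1−p3)/(1−p1) − p3)·(N−i−j)·G^λ_{i,j+1}(x,y) − ((1−p1)p3/λ)·(λ(1−p2)−1)·j·G^λ_{i,j−1}(x,y) − (p3/λ)·(λp1(1−p2)+1−p1)·j·G^λ_{i+1,j−1}(x,y) − p2·(λ(1−p3)+p3)·i·G^λ_{i−1,j+1}(x,y) − [ ((λ(1−p3)+p3)(λp1(1−p2)+1−p1)/λ)·i + p2 p3·j − ((λ(1−p2)−1)(λp1(1−p3)−p3(1−p1))/λ)·(N−i−j)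 ]·G^λ_{i,j}(x,y), where N−i−j denotes the real number N−i−j and every term with index i−1 (resp. j−1) has coefficient proportional to i (resp. j), so truncated natural subtraction may be used for the indices. -/
/-!
The proof uses generating functions. With `q = p / (1 - p)` and `n ≤ M`, the number `k_n(x; p, M)`
is the coefficient of `S ^ x * T ^ (M - x)` in `(T + q S) ^ (M - n) * (T - S) ^ n` (`kraw_sum`).
Summing successively over `x`, `y` and `a` gives, for `r = N - i - j`,
`∑ G_{i,j}(x, y) z ^ x w ^ y = U ^ r * V ^ i * W ^ j`, where `U`, `V`, `W` are affine forms in `z`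
and `w` (`gen_coeff`).

Multiplication of `G_{i,j}(x, y)` by `x` corresponds to the operator `z ∂/∂z`. Since `λ ≠ 0`, the
three forms are linearly independent and `z = α U + β V + γ W` for explicit constants. Each of the
three terms of `∂/∂z (U ^ r * V ^ i * W ^ j)` has one exponent lowered by one; multiplying it by
`α U + β V + γ W` raises one exponent, so the total exponent is `N` again (`gen_recurrence`). The
nine resulting terms are the seven of the recurrence, the diagonal one occurring three times.
-/


/-- The (renormalized) Krawtchouk polynomial `k_n(x; p, N)`.
For `x ≥ 0` it equals `(p/(1-p))^x * C(N,x) * ₂F₁(-n,-x;-N;1/p)` written as a finite sum,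
and it is `0` for `x < 0`. -/
noncomputable def kraw (p : ℝ) (N n : ℕ) (x : ℤ) : ℝ :=
  if x < 0 then 0
  else (p / (1 - p)) ^ x * (N.choose x.toNat : ℝ) *
    ∑ m ∈ Finset.range (min n x.toNat + 1),
      (-1 : ℝ) ^ m * (n.choose m : ℝ) * (x.toNat.choose m : ℝ) * (m.factorial : ℝ) *
        ((N - m).factorial / (N.factorial : ℝ)) * p ^ (-(m : ℤ))

/-- The `λ`-Griffiths polynomial `G^λ_{i,j}(x,y; p1,p2,p3; N)`. -/
noncomputable def griffiths (lam p1 p2 p3 : ℝ) (N i j : ℕ) (x y : ℤ) : ℝ :=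
  if y < 0 ∨ (N : ℤ) < y then 0
  else ∑ a ∈ Finset.range (N - j + 1),
    lam ^ a * kraw p1 (N - j) i (a : ℤ) * kraw p2 (N - a) j y * kraw p3 (N - y.toNat) a x

/-! ### Generating functions of Krawtchouk polynomials -/

open Polynomial in
/-- The homogeneous generating function of the Krawtchouk polynomials, over any commutative ring
receiving a homomorphism from `ℝ`. It follows from `T - S = (T + q S) - (1 + q) S`, where
`q = p / (1 - p)`, by expanding twice with the binomial theorem. -/
lemma kraw_sum {R : Type*} [CommRing R] (φ : ℝ →+* R) (S T : R) (p : ℝ) (hp : 0 < p)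
    (hp' : p < 1) (M n : ℕ) (hn : n ≤ M) :
    ∑ a ∈ Finset.range (M + 1), φ (kraw p M n (a : ℤ)) * (S ^ a * T ^ (M - a)) =
      (T + φ (p / (1 - p)) * S) ^ (M - n) * (T - S) ^ n := by
  obtain ⟨q, hq⟩ : ∃ q, q = p / (1 - p) := ⟨_, rfl⟩
  rw [← hq]
  have h1p : (1 - p) ≠ 0 := by linarith
  have hqp : q * p⁻¹ = 1 + q := by rw [hq]; field_simp; ring
  have hk : ∀ a ∈ Finset.range (M + 1), kraw p M n (a : ℤ) =
      ∑ m ∈ Finset.range (n + 1), if m ≤ a then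
        (-1) ^ m * (n.choose m : ℝ) * (1 + q) ^ m * q ^ (a - m) * ((M - m).choose (a - m) : ℝ)
        else 0 := by
    intro a ha
    have haM : a ≤ M := by simpa [Nat.lt_succ_iff] using ha
    have hsub : Finset.range (min n a + 1) ⊆ Finset.range (n + 1) := by
      intro t; simp only [Finset.mem_range]; omega
    rw [kraw, if_neg (by omega), Int.toNat_natCast, Finset.mul_sum,
      ← Finset.sum_subset hsub]
    · refine Finset.sum_congr rfl fun m hm => ?_
      have hma : m ≤ a := by simp only [Finset.mem_range] at hm; omega
      rw [if_pos hma]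
      have e1 : (M.choose a : ℝ) * a.choose m = M.choose m * (M - m).choose (a - m) := by
        exact_mod_cast Nat.choose_mul hma
      have e2 : (M.choose m : ℝ) * m.factorial * (M - m).factorial = M.factorial := by
        exact_mod_cast Nat.choose_mul_factorial_mul_factorial (hma.trans haM)
      have e3 : (M.factorial : ℝ) ≠ 0 := by positivity
      have e4 : q ^ a = q ^ m * q ^ (a - m) := by rw [← pow_add]; congr 1; omega
      have e5 : p ^ (-(m : ℤ)) * q ^ m = (1 + q) ^ m := by
        rw [← hqp, mul_pow, zpow_neg, zpow_natCast, inv_pow, mul_comm]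
      rw [← hq, zpow_natCast, e4, ← e5]
      generalize p ^ (-(m : ℤ)) = t
      field_simp
      linear_combination (q ^ m * t * q ^ (a - m) * n.choose m * m.factorial
        * (M - m).factorial : ℝ) * e1
        + (q ^ m * t * q ^ (a - m) * n.choose m * (M - m).choose (a - m) : ℝ) * e2
    · intro m hm hm'
      rw [if_neg]
      simp only [Finset.mem_range] at hm hm'
      omega
  have hT : T - S = φ (-(1 + q)) * S + (T + φ q * S) := by simp; ring
  rw [hT, add_pow (φ (-(1 + q)) * S), Finset.mul_sum]
  have hR : ∀ m ∈ Finset.range (n + 1), (T + φ q * S) ^ (M - n) *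
      ((φ (-(1 + q)) * S) ^ m * (T + φ q * S) ^ (n - m) * (n.choose m : R)) =
      ∑ a ∈ Finset.range (M + 1), φ (if m ≤ a then
        (-1) ^ m * (n.choose m : ℝ) * (1 + q) ^ m * q ^ (a - m) * ((M - m).choose (a - m) : ℝ)
        else 0) * (S ^ a * T ^ (M - a)) := by
    intro m hm
    have hmn : m ≤ n := by simpa [Nat.lt_succ_iff] using hm
    have e : (T + φ q * S) ^ (M - n) *
      ((φ (-(1 + q)) * S) ^ m * (T + φ q * S) ^ (n - m) * (n.choose m : R)) =
      (φ (-(1 + q)) * S) ^ m * (n.choose m : R) * (φ q * S + T) ^ (M - m) := by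
      have : M - m = (M - n) + (n - m) := by omega
      rw [this, pow_add, add_comm (φ q * S)]; ring
    have e' : M + 1 = m + (M - m + 1) := by omega
    rw [e, add_pow, Finset.mul_sum, e']
    symm
    rw [Finset.sum_range_add, Finset.sum_eq_zero, zero_add]
    · refine Finset.sum_congr rfl fun b hb => ?_
      have h2 : M - (m + b) = M - m - b := by omega
      rw [if_pos (by omega), h2, Nat.add_sub_cancel_left, neg_eq_neg_one_mul]
      simp only [map_mul, map_pow, map_natCast, map_neg, map_one]
      ring
    · intro a ha
      rw [if_neg (by simpa using ha)]
      simp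
  rw [Finset.sum_congr rfl hR, Finset.sum_comm]
  refine Finset.sum_congr rfl fun a ha => ?_
  rw [hk a ha, map_sum, Finset.sum_mul]

lemma kraw_eq_zero (p : ℝ) (M n x : ℕ) (h : M < x) : kraw p M n (x : ℤ) = 0 := by
  simp [kraw, Nat.choose_eq_zero_of_lt h]

open Polynomial in
lemma kraw_eq_coeff (p : ℝ) (hp : 0 < p) (hp' : p < 1) (M n : ℕ) (hn : n ≤ M) (x : ℕ) :
    ((1 + C (p / (1 - p)) * X) ^ (M - n) * (1 - X) ^ n : ℝ[X]).coeff x =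
      kraw p M n (x : ℤ) := by
  rw [← kraw_sum C X 1 p hp hp' M n hn, finsetSum_coeff]
  simp only [one_pow, mul_one, coeff_C_mul, coeff_X_pow, mul_ite, mul_zero]
  rw [Finset.sum_ite_eq]
  split_ifs with h
  · rfl
  · rw [kraw_eq_zero]
    simpa using h

/-! ### Generating function of the Griffiths polynomials -/

open Polynomial in
/-- The generating function `U ^ r * V ^ i * W ^ j` in `ℝ[w][z]`: the outer variable `z` marks
`x` and the inner variable `w` marks `y`. The linear forms are
`U = A + q₂ w + λ q₁ (1 - z)`, `V = A + q₂ w - λ (1 - z)` and `W = A - w`, with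
`A = 1 + q₃ z` and `qₖ = pₖ / (1 - pₖ)`. -/
noncomputable def gen (lam p1 p2 p3 : ℝ) (r i j : ℕ) : ℝ[X][X] :=
  (1 + C (C (p3 / (1 - p3))) * X + C (C (p2 / (1 - p2))) * C X
      + C (C (p1 / (1 - p1))) * (C (C lam) * (1 - X))) ^ r
    * (1 + C (C (p3 / (1 - p3))) * X + C (C (p2 / (1 - p2))) * C X
      - C (C lam) * (1 - X)) ^ i
    * (1 + C (C (p3 / (1 - p3))) * X - C X) ^ j

open Polynomial in
/-- For `N = r + i + j`, the values `G_{i,j}(x, y)` are the coefficients of `gen`. -/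
lemma gen_coeff (lam p1 p2 p3 : ℝ) (hp1 : 0 < p1) (hp1' : p1 < 1) (hp2 : 0 < p2) (hp2' : p2 < 1)
    (hp3 : 0 < p3) (hp3' : p3 < 1) (N r i j x y : ℕ) (h : r + i + j = N) (hy : y ≤ N) :
    ((gen lam p1 p2 p3 r i j).coeff x).coeff y = griffiths lam p1 p2 p3 N i j x y := by
  set A : ℝ[X][X] := 1 + C (C (p3 / (1 - p3))) * X with hA
  set A' : ℝ[X] := 1 + C (p3 / (1 - p3)) * X with hA'
  have hAA : A = A'.map C := by simp [hA, hA']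
  have key : gen lam p1 p2 p3 r i j = ∑ a ∈ Finset.range (N - j + 1),
      ∑ b ∈ Finset.range (N - a + 1),
        C (C (lam ^ a * kraw p1 (N - j) i a * kraw p2 (N - a) j b) * X ^ b) *
          (A' ^ (N - a - b) * (1 - X) ^ a).map C := by
    have h1 := kraw_sum (C.comp C) (C (C lam) * (1 - X)) (A + C (C (p2 / (1 - p2))) * C X)
      p1 hp1 hp1' (N - j) i (by omega)
    have hr : N - j - i = r := by omega
    rw [hr] at h1
    simp only [RingHom.comp_apply] at h1
    rw [gen, ← h1, Finset.sum_mul]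
    refine Finset.sum_congr rfl fun a ha => ?_
    have haN : a ≤ N - j := by simpa [Nat.lt_succ_iff] using ha
    have h2 := kraw_sum (C.comp C) (C X) A p2 hp2 hp2' (N - a) j (by omega)
    simp only [RingHom.comp_apply] at h2
    have e : N - a - j = N - j - a := by omega
    rw [e] at h2
    calc _ = C (C (kraw p1 (N - j) i a)) * (C (C lam) * (1 - X)) ^ a *
          ((A + C (C (p2 / (1 - p2))) * C X) ^ (N - j - a) * (A - C X) ^ j) := by ring
      _ = _ := by
        rw [← h2, Finset.mul_sum]
        refine Finset.sum_congr rfl fun b hb => ?_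
        simp only [hAA, Polynomial.map_mul, Polynomial.map_pow, map_mul, map_pow,
          Polynomial.map_sub, Polynomial.map_one, Polynomial.map_X]
        rw [mul_pow (C (C lam))]
        ring
  rw [key, griffiths, if_neg (by omega), Int.toNat_natCast, finsetSum_coeff, finsetSum_coeff]
  refine Finset.sum_congr rfl fun a ha => ?_
  have haN : a ≤ N - j := by simpa [Nat.lt_succ_iff] using ha
  rw [finsetSum_coeff, finsetSum_coeff]
  simp only [coeff_C_mul, coeff_map, coeff_mul_C, coeff_X_pow, mul_ite, ite_mul, mul_zero,
    zero_mul, mul_one]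
  rw [Finset.sum_ite_eq]
  split_ifs with hb
  · have hb' : y ≤ N - a := by simpa [Nat.lt_succ_iff] using hb
    have e : N - a - y = N - y - a := by omega
    rw [e, hA', kraw_eq_coeff p3 hp3 hp3' (N - y) a (by omega)]
  · rw [kraw_eq_zero p2 (N - a) j y (by simpa using hb)]
    simp

/-! ### The recurrence -/

open Polynomial in
/-- The recurrence for the coefficients of `gen`: apply `z ∂/∂z` and write `z` as
`α U + β V + γ W`. -/
lemma gen_recurrence (lam p1 p2 p3 : ℝ) (hlam : lam ≠ 0) (hp1' : p1 < 1) (hp2' : p2 < 1)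
    (hp3' : p3 < 1) (r i j x y : ℕ) (g : ℕ → ℕ → ℕ → ℝ)
    (hg : ∀ r i j, g r i j = ((gen lam p1 p2 p3 r i j).coeff x).coeff y)
    (α β γ : ℝ) (hα : α = (1 - p3) * ((1 - p2) * (1 - p1) - (1 - p1) / lam))
    (hβ : β = (1 - p3) * ((1 - p2) * p1 + (1 - p1) / lam)) (hγ : γ = (1 - p3) * p2) :
    (x : ℝ) * g r i j =
      (r : ℝ) * (p3 / (1 - p3) - p1 / (1 - p1) * lam)
          * (α * g r i j + β * g (r - 1) (i + 1) j + γ * g (r - 1) i (j + 1))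
        + (i : ℝ) * (p3 / (1 - p3) + lam)
          * (α * g (r + 1) (i - 1) j + β * g r i j + γ * g r (i - 1) (j + 1))
        + (j : ℝ) * (p3 / (1 - p3))
          * (α * g (r + 1) i (j - 1) + β * g r (i + 1) (j - 1) + γ * g r i j) := by
  have h1 : 1 - p1 ≠ 0 := by linarith
  have h2 : 1 - p2 ≠ 0 := by linarith
  have h3 : 1 - p3 ≠ 0 := by linarith
  set U : ℝ[X][X] := 1 + C (C (p3 / (1 - p3))) * X + C (C (p2 / (1 - p2))) * C X
      + C (C (p1 / (1 - p1))) * (C (C lam) * (1 - X)) with hU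
  set V : ℝ[X][X] := 1 + C (C (p3 / (1 - p3))) * X + C (C (p2 / (1 - p2))) * C X
      - C (C lam) * (1 - X) with hV
  set W : ℝ[X][X] := 1 + C (C (p3 / (1 - p3))) * X - C X with hW
  have hgen : ∀ r i j, gen lam p1 p2 p3 r i j = U ^ r * V ^ i * W ^ j := fun _ _ _ => rfl
  have hX : (X : ℝ[X][X]) = C (C α) * U + C (C β) * V + C (C γ) * W := by
    have c0 : α * (1 + p1 / (1 - p1) * lam) + β * (1 - lam) + γ = 0 := by
      subst hα hβ hγ; field_simp; ring
    have c1 : α * (p3 / (1 - p3) - p1 / (1 - p1) * lam) + β * (p3 / (1 - p3) + lam)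
        + γ * (p3 / (1 - p3)) = 1 := by
      subst hα hβ hγ; field_simp; ring
    have c2 : α * (p2 / (1 - p2)) + β * (p2 / (1 - p2)) - γ = 0 := by
      subst hα hβ hγ; field_simp; ring
    replace c0 := congrArg (fun t : ℝ => (C (C t) : ℝ[X][X])) c0
    replace c1 := congrArg (fun t : ℝ => (C (C t) : ℝ[X][X])) c1
    replace c2 := congrArg (fun t : ℝ => (C (C t) : ℝ[X][X])) c2
    simp only [map_add, map_sub, map_mul, map_one, map_zero] at c0 c1 c2
    rw [hU, hV, hW]
    linear_combination -c0 - X * c1 - C X * c2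
  have dU : derivative U = C (C (p3 / (1 - p3) - p1 / (1 - p1) * lam)) := by
    simp [hU]; ring
  have dV : derivative V = C (C (p3 / (1 - p3) + lam)) := by
    simp [hV]
  have dW : derivative W = C (C (p3 / (1 - p3))) := by
    simp [hW]
  have aU : (r : ℝ[X][X]) * (X * U ^ (r - 1) * V ^ i * W ^ j) =
      (r : ℝ[X][X]) * (C (C α) * gen lam p1 p2 p3 r i j + C (C β) * gen lam p1 p2 p3 (r - 1) (i + 1) j
        + C (C γ) * gen lam p1 p2 p3 (r - 1) i (j + 1)) := by
    simp only [hgen]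
    rcases r with _ | r
    · simp
    · rw [hX, Nat.add_sub_cancel]; ring
  have aV : (i : ℝ[X][X]) * (X * U ^ r * V ^ (i - 1) * W ^ j) =
      (i : ℝ[X][X]) * (C (C α) * gen lam p1 p2 p3 (r + 1) (i - 1) j + C (C β) * gen lam p1 p2 p3 r i j
        + C (C γ) * gen lam p1 p2 p3 r (i - 1) (j + 1)) := by
    simp only [hgen]
    rcases i with _ | i
    · simp
    · rw [hX, Nat.add_sub_cancel]; ring
  have aW : (j : ℝ[X][X]) * (X * U ^ r * V ^ i * W ^ (j - 1)) =
      (j : ℝ[X][X]) * (C (C α) * gen lam p1 p2 p3 (r + 1) i (j - 1)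
        + C (C β) * gen lam p1 p2 p3 r (i + 1) (j - 1) + C (C γ) * gen lam p1 p2 p3 r i j) := by
    simp only [hgen]
    rcases j with _ | j
    · simp
    · rw [hX, Nat.add_sub_cancel]; ring
  have main : X * derivative (gen lam p1 p2 p3 r i j) =
      C (C ((r : ℝ) * (p3 / (1 - p3) - p1 / (1 - p1) * lam)))
        * (C (C α) * gen lam p1 p2 p3 r i j + C (C β) * gen lam p1 p2 p3 (r - 1) (i + 1) j
          + C (C γ) * gen lam p1 p2 p3 (r - 1) i (j + 1))
      + C (C ((i : ℝ) * (p3 / (1 - p3) + lam)))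
        * (C (C α) * gen lam p1 p2 p3 (r + 1) (i - 1) j + C (C β) * gen lam p1 p2 p3 r i j
          + C (C γ) * gen lam p1 p2 p3 r (i - 1) (j + 1))
      + C (C ((j : ℝ) * (p3 / (1 - p3))))
        * (C (C α) * gen lam p1 p2 p3 (r + 1) i (j - 1)
          + C (C β) * gen lam p1 p2 p3 r (i + 1) (j - 1)
          + C (C γ) * gen lam p1 p2 p3 r i j) := by
    have hd : X * derivative (gen lam p1 p2 p3 r i j) =
        derivative U * ((r : ℝ[X][X]) * (X * U ^ (r - 1) * V ^ i * W ^ j))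
        + derivative V * ((i : ℝ[X][X]) * (X * U ^ r * V ^ (i - 1) * W ^ j))
        + derivative W * ((j : ℝ[X][X]) * (X * U ^ r * V ^ i * W ^ (j - 1))) := by
      rw [hgen, derivative_mul, derivative_mul, derivative_pow, derivative_pow, derivative_pow]
      simp only [map_natCast]
      ring
    rw [hd, aU, aV, aW, dU, dV, dW]
    simp only [map_mul, map_natCast]
    ring
  have hx : ((X * derivative (gen lam p1 p2 p3 r i j)).coeff x).coeff y = (x : ℝ) * g r i j := by
    rw [hg]
    rcases x with _ | x
    · simp
    · rw [coeff_X_mul, coeff_derivative]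
      have : ((x : ℝ[X]) + 1) = C ((x : ℝ) + 1) := by simp
      rw [this, coeff_mul_C]
      push_cast
      ring
  rw [← hx, main]
  simp only [coeff_add, coeff_C_mul, hg]

/-- Recurrence relation (first) for the `λ`-Griffiths polynomials. -/
theorem griffiths_recurrence_x (N : ℕ) (p1 p2 p3 : ℝ)
    (hp1 : 0 < p1) (hp1' : p1 < 1) (hp2 : 0 < p2) (hp2' : p2 < 1)
    (hp3 : 0 < p3) (hp3' : p3 < 1) (lam : ℝ) (hlam : lam ≠ 0)
    (i j : ℕ) (hij : i + j ≤ N)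
    (x y : ℤ) (hx : 0 ≤ x) (hy : 0 ≤ y) (hxy : x + y ≤ (N : ℤ)) :
    -(x : ℝ) * griffiths lam p1 p2 p3 N i j x y =
      ((1 - p1) / lam) * (lam * p1 * (1 - p3) / (1 - p1) - p3)
        * (lam * p1 * (1 - p2) / (1 - p1) + 1) * ((N : ℝ) - i - j)
        * griffiths lam p1 p2 p3 N (i + 1) j x y
      - ((1 - p1) / lam) * (lam * (1 - p3) + p3) * (lam * (1 - p2) - 1) * (i : ℝ)
        * griffiths lam p1 p2 p3 N (i - 1) j x y
      + p2 * (lam * p1 * (1 - p3) / (1 - p1) - p3) * ((N : ℝ) - i - j)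
        * griffiths lam p1 p2 p3 N i (j + 1) x y
      - ((1 - p1) * p3 / lam) * (lam * (1 - p2) - 1) * (j : ℝ)
        * griffiths lam p1 p2 p3 N i (j - 1) x y
      - (p3 / lam) * (lam * p1 * (1 - p2) + 1 - p1) * (j : ℝ)
        * griffiths lam p1 p2 p3 N (i + 1) (j - 1) x y
      - p2 * (lam * (1 - p3) + p3) * (i : ℝ)
        * griffiths lam p1 p2 p3 N (i - 1) (j + 1) x y
      - (((lam * (1 - p3) + p3) * (lam * p1 * (1 - p2) + 1 - p1) / lam) * (i : ℝ)
          + p2 * p3 * (j : ℝ)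
          - ((lam * (1 - p2) - 1) * (lam * p1 * (1 - p3) - p3 * (1 - p1)) / lam)
            * ((N : ℝ) - i - j))
        * griffiths lam p1 p2 p3 N i j x y := by
  lift x to ℕ using hx
  lift y to ℕ using hy
  obtain ⟨r, hr⟩ : ∃ r, r + i + j = N := ⟨N - i - j, by omega⟩
  have hyN : y ≤ N := by omega
  have h1 : 1 - p1 ≠ 0 := by linarith
  have h3 : 1 - p3 ≠ 0 := by linarith
  have hNr : (N : ℝ) - i - j = r := by rw [← hr]; push_cast; ring
  let g : ℕ → ℕ → ℕ → ℝ := fun r i j => ((gen lam p1 p2 p3 r i j).coeff x).coeff y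
  have hG : ∀ s k l, s + k + l = N → griffiths lam p1 p2 p3 N k l x y = g s k l :=
    fun s k l h => (gen_coeff lam p1 p2 p3 hp1 hp1' hp2 hp2' hp3 hp3' N s k l x y h hyN).symm
  have key := gen_recurrence lam p1 p2 p3 hlam hp1' hp2' hp3' r i j x y g (fun _ _ _ => rfl)
    _ _ _ rfl rfl rfl
  -- A shifted index may leave the range `r + i + j = N`, but only where its coefficient vanishes.
  have g0 := hG r i j hr
  have g1 : (r : ℝ) * griffiths lam p1 p2 p3 N (i + 1) j x y = r * g (r - 1) (i + 1) j := by
    rcases r with _ | r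
    · simp
    · rw [hG r (i + 1) j (by omega), Nat.add_sub_cancel]
  have g2 : (r : ℝ) * griffiths lam p1 p2 p3 N i (j + 1) x y = r * g (r - 1) i (j + 1) := by
    rcases r with _ | r
    · simp
    · rw [hG r i (j + 1) (by omega), Nat.add_sub_cancel]
  have g3 : (i : ℝ) * griffiths lam p1 p2 p3 N (i - 1) j x y = i * g (r + 1) (i - 1) j := by
    rcases i with _ | i
    · simp
    · rw [hG (r + 1) (i + 1 - 1) j (by omega)]
  have g4 : (i : ℝ) * griffiths lam p1 p2 p3 N (i - 1) (j + 1) x y = i * g r (i - 1) (j + 1) := by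
    rcases i with _ | i
    · simp
    · rw [hG r (i + 1 - 1) (j + 1) (by omega)]
  have g5 : (j : ℝ) * griffiths lam p1 p2 p3 N i (j - 1) x y = j * g (r + 1) i (j - 1) := by
    rcases j with _ | j
    · simp
    · rw [hG (r + 1) i (j + 1 - 1) (by omega)]
  have g6 : (j : ℝ) * griffiths lam p1 p2 p3 N (i + 1) (j - 1) x y = j * g r (i + 1) (j - 1) := by
    rcases j with _ | j
    · simp
    · rw [hG r (i + 1) (j + 1 - 1) (by omega)]
  rw [hNr, g0, Int.cast_natCast, neg_mul, key]
  simp only [mul_assoc, g1, g2, g3, g4, g5, g6]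
  field_simp
  ring
end

section
/- Let N be a natural number, p1, p2, p3 reals with 0 < p1, p2, p3 < 1, and λ a real number. Then for all natural numbers i, j with i + j ≤ N and all integers x, y with 0 ≤ x, 0 ≤ y and x + y ≤ N, the λ-Griffiths polynomials satisfy the recurrence relation −y·G^λ_{i,j}(x,y) = −p1 p2 (N−i−j)·G^λ_{i+1,j}(x,y) − p2(1−p1)·i·G^λ_{i−1,j}(x,y) + p2(N−i−j)·G^λ_{i,j+1}(x,y) + (1−p1)(1−p2)·j·G^λ_{i,j−1}(x,y) + p1(1−p2)·j·G^λ_{i+1,j−1}(x,y) + p2·i·G^λ_{i−1,j+1}(x,y) − [ p1 p2·i + (1−p2)·j + p2(1−p1)·(N−i−j) ]·G^λ_{i,j}(x,y), where N−i−j denotes the real number N−i−j and every term with index i−1 (resp. j−1) has coefficient proportional to i (resp. j), so truncated natural subtraction may be used for the indices. -/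
/-! ### The generating function of the Krawtchouk polynomials -/

open Polynomial in
/-- The generating polynomial `(1 + r X)^m (1 - X)^n`, `r = p / (1 - p)`, of the Krawtchouk
polynomial of degree `n` and size `m + n`. -/
noncomputable def krawGen (p : ℝ) (m n : ℕ) : ℝ[X] :=
  (1 + C (p / (1 - p)) * X) ^ m * (1 - X) ^ n

lemma kraw_eq_zero_of_lt (p : ℝ) (N n a : ℕ) (h : N < a) : kraw p N n a = 0 := by
  simp [kraw, Nat.choose_eq_zero_of_lt h]

open Polynomial in
lemma coeff_one_add_C_mul_X_pow (r : ℝ) (m k : ℕ) :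
    ((1 + C r * X) ^ m : ℝ[X]).coeff k = r ^ k * (m.choose k : ℝ) := by
  have h : (1 + C r * X : ℝ[X]) ^ m = ((1 + X) ^ m : ℝ[X]).comp (C r * X) := by simp
  rw [h, comp_C_mul_X_coeff, coeff_one_add_X_pow, mul_comm]

open Polynomial in
/-- The values of the Krawtchouk polynomial are the coefficients of its generating polynomial:
expand `(1 - X)^n` in powers of `1 + r X` and `X`, using `1 - X = (1 + r X) - X / (1 - p)`. -/
lemma kraw_eq_coeff_s6 (p : ℝ) (hp : 0 < p) (hp' : p < 1) (m n x : ℕ) :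
    kraw p (m + n) n x = (krawGen p m n).coeff x := by
  have hq : (1 - p) ≠ 0 := by linarith
  have hp0 : p ≠ 0 := hp.ne'
  set r := p / (1 - p) with hr
  have h1 : (1 - X : ℝ[X]) = C (-(1 - p)⁻¹) * X + (1 + C r * X) := by
    have : (1 : ℝ) = (1 - p)⁻¹ - r := by rw [hr]; field_simp
    have h2 : (1 : ℝ[X]) = C ((1 - p)⁻¹) - C r := by rw [← C_sub, ← this, C_1]
    rw [C_neg]
    linear_combination (-X : ℝ[X]) * h2
  have h3 : krawGen p m n = ∑ k ∈ Finset.range (n + 1),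
      C ((-(1 - p)⁻¹) ^ k * (n.choose k : ℝ)) * ((1 + C r * X) ^ (m + n - k) * X ^ k) := by
    rw [krawGen, ← hr, h1, add_pow (C (-(1 - p)⁻¹) * X), Finset.mul_sum]
    refine Finset.sum_congr rfl fun k hk => ?_
    have hk' : k ≤ n := by simpa [Nat.lt_succ_iff] using hk
    rw [show m + n - k = m + (n - k) by omega, pow_add, C_mul, C_pow, mul_pow, C_eq_natCast]
    ring
  rw [h3, finsetSum_coeff]
  simp only [coeff_C_mul, coeff_mul_X_pow', coeff_one_add_C_mul_X_pow]
  have h4 : ∀ f : ℕ → ℝ, (∀ k, x < k → f k = 0) →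
      ∑ k ∈ Finset.range (n + 1), f k = ∑ k ∈ Finset.range (min n x + 1), f k := by
    intro f hf
    symm
    apply Finset.sum_subset
    · intro k; simp only [Finset.mem_range]; omega
    · intro k hk hk2
      simp only [Finset.mem_range] at hk hk2
      exact hf k (by omega)
  rw [h4 _ (by intro k hk; rw [if_neg (by omega)]; ring)]
  have hx : ¬ ((x : ℤ) < 0) := by omega
  simp only [kraw, hx, if_false, Int.toNat_natCast, Finset.mul_sum, zpow_natCast, zpow_neg]
  refine Finset.sum_congr rfl fun k hk => ?_
  have hk' : k ≤ n ∧ k ≤ x := by simp only [Finset.mem_range] at hk; omega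
  rw [if_pos hk'.2, ← hr]
  have c1 : ((m + n).choose x : ℝ) * (x.choose k : ℝ)
      = ((m + n).choose k : ℝ) * ((m + n - k).choose (x - k) : ℝ) := by
    exact_mod_cast Nat.choose_mul hk'.2
  have c2 : ((m + n).choose k : ℝ) * (k.factorial : ℝ) * ((m + n - k).factorial : ℝ)
      = ((m + n).factorial : ℝ) := by
    exact_mod_cast Nat.choose_mul_factorial_mul_factorial (show k ≤ m + n by omega)
  have hf : ((m + n).factorial : ℝ) ≠ 0 := by exact_mod_cast Nat.factorial_ne_zero _
  have c3 : ((m + n).choose k : ℝ) * (k.factorial : ℝ) *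
      (((m + n - k).factorial : ℝ) / ((m + n).factorial : ℝ)) = 1 := by
    rw [← mul_div_assoc, c2, div_self hf]
  have c4 : r ^ x * (p ^ k)⁻¹ = r ^ (x - k) * ((1 - p)⁻¹) ^ k := by
    obtain ⟨d, rfl⟩ := Nat.exists_eq_add_of_le hk'.2
    rw [Nat.add_sub_cancel_left, pow_add, hr, div_pow p (1 - p) k, inv_pow]
    field_simp
  rw [neg_pow ((1 - p)⁻¹) k]
  linear_combination
    (r ^ x * (p ^ k)⁻¹ * (-1) ^ k * (n.choose k : ℝ) * (k.factorial : ℝ) *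
      (((m + n - k).factorial : ℝ) / ((m + n).factorial : ℝ))) * c1 +
    (r ^ x * (p ^ k)⁻¹ * (-1) ^ k * (n.choose k : ℝ) *
      ((m + n - k).choose (x - k) : ℝ)) * c3 +
    ((-1) ^ k * (n.choose k : ℝ) * ((m + n - k).choose (x - k) : ℝ)) * c4

/-! ### Relations between generating polynomials -/

open Polynomial in
lemma krawGen_lift (p : ℝ) (hp' : p < 1) (m n : ℕ) :
    C (1 - p) * krawGen p (m + 1) n + C p * krawGen p m (n + 1) = krawGen p m n := by
  have hq : (1 - p) ≠ 0 := by linarith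
  have h : (C (1 - p) * C (p / (1 - p)) : ℝ[X]) = C p := by
    rw [← C_mul]; congr 1; field_simp
  have h1 : (C (1 - p) + C p : ℝ[X]) = 1 := by rw [← C_add, ← C_1]; congr 1; ring
  simp only [krawGen, pow_succ]
  linear_combination ((1 + C (p / (1 - p)) * X) ^ m * (1 - X) ^ n) * (X * h + h1)

open Polynomial in
lemma X_mul_derivative_krawGen (p : ℝ) (m n : ℕ) :
    X * derivative (krawGen p m n) =
      (m : ℝ[X]) * C (p / (1 - p)) * X * krawGen p (m - 1) n
        - (n : ℝ[X]) * X * krawGen p m (n - 1) := by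
  simp only [krawGen, derivative_mul, derivative_pow, derivative_add, derivative_sub,
    derivative_one, derivative_X, derivative_C, C_eq_natCast]
  ring

open Polynomial in
lemma coeff_X_mul_derivative (P : ℝ[X]) (x : ℕ) :
    (X * derivative P).coeff x = x * P.coeff x := by
  cases x with
  | zero => simp
  | succ x => rw [coeff_X_mul, coeff_derivative]; push_cast; ring

open Polynomial in
lemma natCast_mul_krawGen_left (p : ℝ) (m n : ℕ) :
    (m : ℝ[X]) * krawGen p m n
      = (m : ℝ[X]) * ((1 + C (p / (1 - p)) * X) * krawGen p (m - 1) n) := by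
  cases m with
  | zero => simp
  | succ m => simp only [krawGen, Nat.add_sub_cancel, pow_succ]; ring

open Polynomial in
lemma natCast_mul_krawGen_right (p : ℝ) (m n : ℕ) :
    (n : ℝ[X]) * krawGen p m n = (n : ℝ[X]) * ((1 - X) * krawGen p m (n - 1)) := by
  cases n with
  | zero => simp
  | succ n => simp only [krawGen, Nat.add_sub_cancel, pow_succ]; ring

open Polynomial in
lemma krawGen_euler (p : ℝ) (m n : ℕ) :
    (m : ℝ[X]) * krawGen p (m - 1) n + (n : ℝ[X]) * krawGen p m (n - 1)
      = ((m : ℝ[X]) + (n : ℝ[X])) * krawGen p m n - X * derivative (krawGen p m n) := by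
  linear_combination X_mul_derivative_krawGen p m n - natCast_mul_krawGen_left p m n
    - natCast_mul_krawGen_right p m n

open Polynomial in
lemma krawGen_recurrence (p : ℝ) (hp' : p < 1) (m n : ℕ) :
    -(X * derivative (krawGen p m n)) =
      C p * (m : ℝ[X]) * (krawGen p (m - 1) (n + 1) - krawGen p m n)
        + C (1 - p) * (n : ℝ[X]) * (krawGen p (m + 1) (n - 1) - krawGen p m n) := by
  have hq : (1 - p) ≠ 0 := by linarith
  have h : (C (1 - p) * C (p / (1 - p)) : ℝ[X]) = C p := by
    rw [← C_mul]; congr 1; field_simp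
  have h1 : (C (1 - p) + C p : ℝ[X]) = 1 := by rw [← C_add, ← C_1]; congr 1; ring
  have h2 : (C p + C p * C (p / (1 - p)) : ℝ[X]) = C (p / (1 - p)) := by
    rw [← C_mul, ← C_add]; congr 1; field_simp; ring
  have e1 : krawGen p (m - 1) (n + 1) = (1 - X) * krawGen p (m - 1) n := by
    simp only [krawGen, pow_succ]; ring
  have e2 : krawGen p (m + 1) (n - 1) = (1 + C (p / (1 - p)) * X) * krawGen p m (n - 1) := by
    simp only [krawGen, pow_succ]; ring
  rw [e1, e2]
  linear_combination -X_mul_derivative_krawGen p m n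
    + C p * natCast_mul_krawGen_left p m n + C (1 - p) * natCast_mul_krawGen_right p m n
    + ((m : ℝ[X]) * X * krawGen p (m - 1) n) * h2 - ((n : ℝ[X]) * X * krawGen p m (n - 1)) * (h + h1)

/-! ### Relations between Krawtchouk polynomials -/

lemma kraw_lift (p : ℝ) (hp : 0 < p) (hp' : p < 1) (N n x : ℕ) (hn : n ≤ N) :
    (1 - p) * kraw p (N + 1) n x + p * kraw p (N + 1) (n + 1) x = kraw p N n x := by
  obtain ⟨m, rfl⟩ := Nat.exists_eq_add_of_le' hn
  rw [show kraw p (m + n + 1) n x = kraw p (m + 1 + n) n x by congr 1; omega,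
    show kraw p (m + n + 1) (n + 1) x = kraw p (m + (n + 1)) (n + 1) x from rfl]
  simp only [kraw_eq_coeff_s6 p hp hp', ← krawGen_lift p hp' m n, Polynomial.coeff_add,
    Polynomial.coeff_C_mul]

lemma kraw_euler (p : ℝ) (hp : 0 < p) (hp' : p < 1) (N n x : ℕ) (hn : n ≤ N) :
    ((N : ℝ) - n) * kraw p (N - 1) n x + n * kraw p (N - 1) (n - 1) x
      = ((N : ℝ) - x) * kraw p N n x := by
  obtain ⟨m, rfl⟩ := Nat.exists_eq_add_of_le' hn
  have h := congrArg (fun P : Polynomial ℝ => Polynomial.coeff P x) (krawGen_euler p m n)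
  have hs : ((m : Polynomial ℝ) + (n : Polynomial ℝ)) = ((m + n : ℕ) : Polynomial ℝ) := by push_cast; rfl
  simp only [hs, Polynomial.coeff_add, Polynomial.coeff_sub, Polynomial.coeff_natCast_mul,
    coeff_X_mul_derivative, ← kraw_eq_coeff_s6 p hp hp'] at h
  have e1 : (m : ℝ) * kraw p (m + n - 1) n x = m * kraw p (m - 1 + n) n x := by
    cases m with
    | zero => simp
    | succ m => congr 2; omega
  have e2 : (n : ℝ) * kraw p (m + n - 1) (n - 1) x = n * kraw p (m + (n - 1)) (n - 1) x := by
    cases n with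
    | zero => simp
    | succ n => rfl
  push_cast at h ⊢
  linear_combination h + e1 + e2

lemma kraw_recurrence (p : ℝ) (hp : 0 < p) (hp' : p < 1) (N n x : ℕ) (hn : n ≤ N) :
    -(x : ℝ) * kraw p N n x =
      p * ((N : ℝ) - n) * (kraw p N (n + 1) x - kraw p N n x)
        + (1 - p) * n * (kraw p N (n - 1) x - kraw p N n x) := by
  obtain ⟨m, rfl⟩ := Nat.exists_eq_add_of_le' hn
  have h := congrArg (fun P : Polynomial ℝ => Polynomial.coeff P x) (krawGen_recurrence p hp' m n)
  simp only [mul_assoc, Polynomial.coeff_neg, Polynomial.coeff_add, Polynomial.coeff_sub,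
    Polynomial.coeff_C_mul, Polynomial.coeff_natCast_mul,
    coeff_X_mul_derivative, ← kraw_eq_coeff_s6 p hp hp'] at h
  have e1 : (m : ℝ) * kraw p (m + n) (n + 1) x = m * kraw p (m - 1 + (n + 1)) (n + 1) x := by
    cases m with
    | zero => simp
    | succ m => congr 2; omega
  have e2 : (n : ℝ) * kraw p (m + n) (n - 1) x = n * kraw p (m + 1 + (n - 1)) (n - 1) x := by
    cases n with
    | zero => simp
    | succ n => congr 2; simp; omega
  push_cast at h ⊢
  linear_combination h - p * e1 - (1 - p) * e2

/-! ### The recurrence of the Griffiths polynomials -/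

/-- The sum defining `griffiths` may be taken over `a ≤ N` for every `j`, since
`k_i(a; p1, N - j)` vanishes for `a > N - j`. -/
lemma griffiths_eq_sum (lam p1 p2 p3 : ℝ) (N i j : ℕ) (x : ℤ) (y : ℕ) (hy : y ≤ N) :
    griffiths lam p1 p2 p3 N i j x y = ∑ a ∈ Finset.range (N + 1),
      lam ^ a * kraw p3 (N - y) a x * (kraw p1 (N - j) i a * kraw p2 (N - a) j y) := by
  rw [griffiths, if_neg (by omega), Int.toNat_natCast]
  refine (Finset.sum_congr rfl fun a _ => ?_).trans
    (Finset.sum_subset (s₁ := Finset.range (N - j + 1)) ?_ ?_)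
  · ring
  · intro k; simp only [Finset.mem_range]; omega
  · intro a _ ha
    simp only [Finset.mem_range] at ha
    rw [kraw_eq_zero_of_lt p1 (N - j) i a (by omega)]
    ring

/-- The recurrence for a single summation index `a`. -/
lemma griffiths_recurrence_summand (N : ℕ) (p1 p2 : ℝ)
    (hp1 : 0 < p1) (hp1' : p1 < 1) (hp2 : 0 < p2) (hp2' : p2 < 1)
    (i j a y : ℕ) (hij : i + j ≤ N) (ha : a ≤ N) :
    -(y : ℝ) * (kraw p1 (N - j) i a * kraw p2 (N - a) j y) =
      - p1 * p2 * ((N : ℝ) - i - j) * (kraw p1 (N - j) (i + 1) a * kraw p2 (N - a) j y)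
      - p2 * (1 - p1) * (i : ℝ) * (kraw p1 (N - j) (i - 1) a * kraw p2 (N - a) j y)
      + p2 * ((N : ℝ) - i - j) * (kraw p1 (N - (j + 1)) i a * kraw p2 (N - a) (j + 1) y)
      + (1 - p1) * (1 - p2) * (j : ℝ)
        * (kraw p1 (N - (j - 1)) i a * kraw p2 (N - a) (j - 1) y)
      + p1 * (1 - p2) * (j : ℝ)
        * (kraw p1 (N - (j - 1)) (i + 1) a * kraw p2 (N - a) (j - 1) y)
      + p2 * (i : ℝ) * (kraw p1 (N - (j + 1)) (i - 1) a * kraw p2 (N - a) (j + 1) y)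
      - (p1 * p2 * (i : ℝ) + (1 - p2) * (j : ℝ) + p2 * (1 - p1) * ((N : ℝ) - i - j))
        * (kraw p1 (N - j) i a * kraw p2 (N - a) j y) := by
  have E1 : (j : ℝ) * ((1 - p1) * kraw p1 (N - (j - 1)) i a
      + p1 * kraw p1 (N - (j - 1)) (i + 1) a) = j * kraw p1 (N - j) i a := by
    rcases Nat.eq_zero_or_pos j with rfl | hj
    · simp
    · rw [show N - (j - 1) = N - j + 1 by omega, kraw_lift p1 hp1 hp1' _ _ _ (by omega)]
  -- For `i + j = N` the size `N - (j + 1)` may truncate, but the coefficient vanishes.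
  have E2 : ((N : ℝ) - i - j) * (p1 * kraw p1 (N - j) (i + 1) a
      + (1 - p1) * kraw p1 (N - j) i a) = ((N : ℝ) - i - j) * kraw p1 (N - (j + 1)) i a := by
    rcases hij.eq_or_lt with h | h
    · have : (N : ℝ) - i - j = 0 := by rw [← h]; push_cast; ring
      simp [this]
    · rw [show N - j = N - (j + 1) + 1 by omega, add_comm (p1 * _),
        kraw_lift p1 hp1 hp1' _ _ _ (by omega)]
  have E3 : (i : ℝ) * ((1 - p1) * kraw p1 (N - j) (i - 1) a
      + p1 * kraw p1 (N - j) i a) = i * kraw p1 (N - (j + 1)) (i - 1) a := by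
    rcases Nat.eq_zero_or_pos i with rfl | hi
    · simp
    · obtain ⟨k, rfl⟩ := Nat.exists_eq_add_of_le' hi
      rw [show N - j = N - (j + 1) + 1 by omega, Nat.add_sub_cancel,
        kraw_lift p1 hp1 hp1' _ _ _ (by omega)]
  have E4 : ((N : ℝ) - i - j) * kraw p1 (N - (j + 1)) i a
      + i * kraw p1 (N - (j + 1)) (i - 1) a = ((N : ℝ) - j - a) * kraw p1 (N - j) i a := by
    have h := kraw_euler p1 hp1 hp1' (N - j) i a (by omega)
    rw [Nat.cast_sub (by omega), Nat.sub_sub] at h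
    linear_combination h
  have E5 : kraw p1 (N - j) i a * (-(y : ℝ) * kraw p2 (N - a) j y) =
      kraw p1 (N - j) i a *
        (p2 * ((N : ℝ) - a - j) * (kraw p2 (N - a) (j + 1) y - kraw p2 (N - a) j y)
          + (1 - p2) * j * (kraw p2 (N - a) (j - 1) y - kraw p2 (N - a) j y)) := by
    -- The recurrence needs `j ≤ N - a`; for larger `a` the common factor is zero.
    by_cases h : a ≤ N - j
    · rw [kraw_recurrence p2 hp2 hp2' (N - a) j y (by omega), Nat.cast_sub ha]
    · rw [kraw_eq_zero_of_lt p1 (N - j) i a (by omega)]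
      ring
  linear_combination E5 + p2 * kraw p2 (N - a) j y * (E2 + E3)
    - p2 * (kraw p2 (N - a) (j + 1) y - kraw p2 (N - a) j y) * E4
    - (1 - p2) * kraw p2 (N - a) (j - 1) y * E1

/-- Recurrence relation (second) for the `λ`-Griffiths polynomials. -/
theorem griffiths_recurrence_y (N : ℕ) (p1 p2 p3 : ℝ)
    (hp1 : 0 < p1) (hp1' : p1 < 1) (hp2 : 0 < p2) (hp2' : p2 < 1)
    (hp3 : 0 < p3) (hp3' : p3 < 1) (lam : ℝ)
    (i j : ℕ) (hij : i + j ≤ N)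
    (x y : ℤ) (hx : 0 ≤ x) (hy : 0 ≤ y) (hxy : x + y ≤ (N : ℤ)) :
    -(y : ℝ) * griffiths lam p1 p2 p3 N i j x y =
      - p1 * p2 * ((N : ℝ) - i - j) * griffiths lam p1 p2 p3 N (i + 1) j x y
      - p2 * (1 - p1) * (i : ℝ) * griffiths lam p1 p2 p3 N (i - 1) j x y
      + p2 * ((N : ℝ) - i - j) * griffiths lam p1 p2 p3 N i (j + 1) x y
      + (1 - p1) * (1 - p2) * (j : ℝ) * griffiths lam p1 p2 p3 N i (j - 1) x y
      + p1 * (1 - p2) * (j : ℝ) * griffiths lam p1 p2 p3 N (i + 1) (j - 1) x y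
      + p2 * (i : ℝ) * griffiths lam p1 p2 p3 N (i - 1) (j + 1) x y
      - (p1 * p2 * (i : ℝ) + (1 - p2) * (j : ℝ) + p2 * (1 - p1) * ((N : ℝ) - i - j))
        * griffiths lam p1 p2 p3 N i j x y := by
  obtain ⟨y, rfl⟩ := Int.eq_ofNat_of_zero_le hy
  have hyN : y ≤ N := by omega
  simp only [griffiths_eq_sum _ _ _ _ _ _ _ _ y hyN, Finset.mul_sum, Int.cast_natCast,
    ← Finset.sum_add_distrib, ← Finset.sum_sub_distrib]
  refine Finset.sum_congr rfl fun a ha => ?_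
  have ha' : a ≤ N := by simpa [Nat.lt_succ_iff] using ha
  linear_combination (lam ^ a * kraw p3 (N - y) a x) *
    griffiths_recurrence_summand N p1 p2 hp1 hp1' hp2 hp2' i j a y hij ha'
end

section
/- Let N be a natural number and p a real with 0 < p < 1. Then for all natural numbers n, x with n ≤ N and x ≤ N, the Krawtchouk polynomials satisfy the contiguity difference relation ((N+1−n)/(1−p)) · k_n(x;p,N) = (N+1−x) · k_n(x;p,N+1) + (x+1) · k_n(x+1;p,N+1), where N+1−n and N+1−x denote real numbers. -/
/-- The coefficient of `C(x,m)` in the expansion of `₂F₁(-n,-x;-N;1/p)` in the basis of binomial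
coefficients. For `m > n` it vanishes, through `n.choose m`. -/
noncomputable def krawCoeff (p : ℝ) (N n m : ℕ) : ℝ :=
  (-1 : ℝ) ^ m * (n.choose m : ℝ) * (m.factorial : ℝ) *
    ((N - m).factorial / (N.factorial : ℝ)) * p ^ (-(m : ℤ))

/-- The upper summation limit may be any bound exceeding `n`: the extra terms contain a vanishing
binomial coefficient. -/
lemma kraw_eq_sum (p : ℝ) (N n x M : ℕ) (hM : n + 1 ≤ M) :
    kraw p N n (x : ℤ) = (p / (1 - p)) ^ x * (N.choose x : ℝ) *
      ∑ m ∈ Finset.range M, krawCoeff p N n m * (x.choose m : ℝ) := by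
  have h0 : ¬ ((x : ℤ) < 0) := by omega
  rw [kraw, if_neg h0, Int.toNat_natCast, zpow_natCast]
  congr 1
  rw [← Finset.sum_subset (Finset.range_mono (show min n x + 1 ≤ M by omega))]
  · refine Finset.sum_congr rfl fun m _ => ?_
    rw [krawCoeff]
    ring
  · intro m _ hm
    rw [Finset.mem_range, not_lt] at hm
    rcases le_total n x with h | h
    · rw [krawCoeff, Nat.choose_eq_zero_of_lt (show n < m by omega)]
      simp
    · rw [Nat.choose_eq_zero_of_lt (show x < m by omega)]
      simp

lemma krawCoeff_rec (p : ℝ) (hp : p ≠ 0) (N n m : ℕ) (hn : n ≤ N) (hm : m ≤ n) :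
    ((N : ℝ) + 1 - n) * krawCoeff p N n m =
      ((N : ℝ) + 1) * (krawCoeff p (N + 1) n m + p * krawCoeff p (N + 1) n (m + 1)) := by
  obtain ⟨k, rfl⟩ := Nat.exists_eq_add_of_le hm
  obtain ⟨l, rfl⟩ := Nat.exists_eq_add_of_le hn
  have hc : ((m + k).choose (m + 1) : ℝ) * ((m : ℝ) + 1) = ((m + k).choose m : ℝ) * k := by
    have h := Nat.choose_succ_right_eq (m + k) m
    rw [Nat.add_sub_cancel_left] at h
    exact_mod_cast h
  have e1 : m + k + l - m = k + l := by omega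
  have e2 : m + k + l + 1 - m = k + l + 1 := by omega
  have e3 : m + k + l + 1 - (m + 1) = k + l := by omega
  have hz : p * p ^ (-((m + 1 : ℕ) : ℤ)) = p ^ (-(m : ℤ)) := by
    rw [← zpow_one_add₀ hp]
    congr 1
    push_cast
    ring
  have hf : ((m + k + l).factorial : ℝ) ≠ 0 := by positivity
  have hN : ((m : ℝ) + k + l + 1) ≠ 0 := by positivity
  simp only [krawCoeff, e1, e2, e3]
  rw [show ∀ a b c d : ℝ, p * (a * b * c * d * p ^ (-((m + 1 : ℕ) : ℤ))) =
    a * b * c * d * (p * p ^ (-((m + 1 : ℕ) : ℤ))) from fun a b c d => by ring, hz]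
  generalize p ^ (-(m : ℤ)) = z
  simp only [Nat.factorial_succ]
  push_cast
  field_simp
  rw [pow_succ]
  linear_combination z * (-1 : ℝ) ^ m * hc

/-- Contiguity difference relation (II) for the Krawtchouk polynomials. -/
theorem kraw_contiguity_difference_II (N : ℕ) (p : ℝ)
    (hp : 0 < p) (hp' : p < 1) (n x : ℕ) (hn : n ≤ N) (hx : x ≤ N) :
    (((N : ℝ) + 1 - n) / (1 - p)) * kraw p N n (x : ℤ) =
      ((N : ℝ) + 1 - x) * kraw p (N + 1) n (x : ℤ)
        + ((x : ℝ) + 1) * kraw p (N + 1) n ((x : ℤ) + 1) := by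
  have hq : 1 - p ≠ 0 := by linarith
  rw [kraw_eq_sum p N n x (n + 1) le_rfl, kraw_eq_sum p (N + 1) n x (n + 2) (by omega),
    show (x : ℤ) + 1 = ((x + 1 : ℕ) : ℤ) by push_cast; rfl,
    kraw_eq_sum p (N + 1) n (x + 1) (n + 2) (by omega)]
  have hb1 : ((N : ℝ) + 1 - x) * ((N + 1).choose x : ℝ) = ((N : ℝ) + 1) * (N.choose x : ℝ) := by
    have h := Nat.choose_mul_succ_eq N x
    have h' : ((N.choose x * (N + 1) : ℕ) : ℝ) = (((N + 1).choose x * (N + 1 - x) : ℕ) : ℝ) :=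
      congrArg _ h
    rw [Nat.cast_mul, Nat.cast_mul, Nat.cast_sub (by omega)] at h'
    push_cast at h'
    linarith
  have hb2 : ((x : ℝ) + 1) * ((N + 1).choose (x + 1) : ℝ) = ((N : ℝ) + 1) * (N.choose x : ℝ) := by
    have h := Nat.add_one_mul_choose_eq N x
    have h' : ((N : ℝ) + 1) * (N.choose x : ℝ) = ((N + 1).choose (x + 1) : ℝ) * ((x : ℝ) + 1) := by
      exact_mod_cast h
    linarith
  -- Pascal's rule gives the forward difference in `x`.
  have hpascal : ∑ m ∈ Finset.range (n + 2), krawCoeff p (N + 1) n m * ((x + 1).choose m : ℝ) =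
      ∑ m ∈ Finset.range (n + 2), krawCoeff p (N + 1) n m * (x.choose m : ℝ) +
        ∑ m ∈ Finset.range (n + 1), krawCoeff p (N + 1) n (m + 1) * (x.choose m : ℝ) := by
    rw [Finset.sum_range_succ', Finset.sum_range_succ' _ (n + 1), add_right_comm,
      ← Finset.sum_add_distrib]
    simp only [Nat.choose_zero_right]
    congr 1
    refine Finset.sum_congr rfl fun m _ => ?_
    rw [Nat.choose_succ_succ]
    push_cast
    ring
  have htop : ∑ m ∈ Finset.range (n + 2), krawCoeff p (N + 1) n m * (x.choose m : ℝ) =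
      ∑ m ∈ Finset.range (n + 1), krawCoeff p (N + 1) n m * (x.choose m : ℝ) := by
    rw [Finset.sum_range_succ _ (n + 1)]
    simp [krawCoeff]
  have hF : ((N : ℝ) + 1 - n) * ∑ m ∈ Finset.range (n + 1), krawCoeff p N n m * (x.choose m : ℝ) =
      ((N : ℝ) + 1) *
        (∑ m ∈ Finset.range (n + 1), krawCoeff p (N + 1) n m * (x.choose m : ℝ) +
          p * ∑ m ∈ Finset.range (n + 1), krawCoeff p (N + 1) n (m + 1) * (x.choose m : ℝ)) := by
    rw [Finset.mul_sum, Finset.mul_sum, ← Finset.sum_add_distrib, Finset.mul_sum]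
    refine Finset.sum_congr rfl fun m hm => ?_
    have hr := krawCoeff_rec p hp.ne' N n m hn (by rw [Finset.mem_range] at hm; omega)
    linear_combination (x.choose m : ℝ) * hr
  rw [hpascal, htop]
  generalize ∑ m ∈ Finset.range (n + 1), krawCoeff p N n m * (x.choose m : ℝ) = A at *
  generalize ∑ m ∈ Finset.range (n + 1), krawCoeff p (N + 1) n m * (x.choose m : ℝ) = B at *
  generalize ∑ m ∈ Finset.range (n + 1), krawCoeff p (N + 1) n (m + 1) * (x.choose m : ℝ) = D at *
  have hr : p / (1 - p) * (1 - p) = p := div_mul_cancel₀ p hq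
  rw [div_mul_eq_mul_div, div_eq_iff hq, pow_succ]
  generalize p / (1 - p) = r at *
  linear_combination r ^ x * (N.choose x : ℝ) * hF - r ^ x * B * (1 - p) * hb1
    - r ^ x * r * (B + D) * (1 - p) * hb2
    - r ^ x * (N.choose x : ℝ) * ((N : ℝ) + 1) * (B + D) * hr
end
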